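/- In the calculus λ_S, if ⟨t⟩ evaluates to a normal form t' (i.e., ⟨t⟩ →_v* t' with t' a normal form), then t' is a value or an open-stuck term of the form ⟨F[x v]⟩. In particular, if t is closed, then t' can only be a closed value. -/

import Mathlib

namespace LambdaS

/-- Terms of the calculus λ_S: variables, λ-abstractions, applications,
the shift operator `S k.t`, and the reset delimiter `⟨t⟩`. -/
inductive Tm : Type
  | var : ℕ → Tm
  | lam : ℕ → Tm → Tm
  | app : Tm → Tm → Tm
  | shift : ℕ → Tm → Tm
  | reset : Tm → Tm
  deriving DecidableEq

/-- A variable fresh for a finite set of variables. -/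
def fresh (s : Finset ℕ) : ℕ := if h : s.Nonempty then s.max' h + 1 else 0

namespace Tm

/-- Free variables. -/
def fv : Tm → Finset ℕ
  | var x => {x}
  | lam x t => fv t \ {x}
  | app t u => fv t ∪ fv u
  | shift k t => fv t \ {k}
  | reset t => fv t

def size : Tm → ℕ
  | var _ => 1
  | lam _ t => size t + 1
  | app t u => size t + size u + 1
  | shift _ t => size t + 1
  | reset t => size t + 1

/-- Renaming of free occurrences of a variable (used for α-renaming with a
fresh target variable). -/
def rename : Tm → ℕ → ℕ → Tm
  | var w, y, z => if w = y then var z else var w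
  | lam w t, y, z => if w = y then lam w t else lam w (rename t y z)
  | app t u, y, z => app (rename t y z) (rename u y z)
  | shift w t, y, z => if w = y then shift w t else shift w (rename t y z)
  | reset t, y, z => reset (rename t y z)

theorem size_rename (t : Tm) (y z : ℕ) : size (rename t y z) = size t := by
  induction t generalizing y z with
  | var w => simp only [rename]; split <;> rfl
  | lam w t ih => simp only [rename]; split <;> simp [size, ih]
  | app t u iht ihu => simp [rename, size, iht, ihu]
  | shift w t ih => simp only [rename]; split <;> simp [size, ih]
  | reset t ih => simp [rename, size, ih]

/-- Capture-avoiding substitution `t{v/x}` of `v` for the free occurrences of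
`x` in `t`; bound variables are α-renamed when needed. -/
def subst : Tm → ℕ → Tm → Tm
  | var w, x, v => if w = x then v else var w
  | lam y t, x, v =>
      if y = x then lam y t
      else if y ∈ fv v then
        lam (fresh (fv v ∪ fv t ∪ {x}))
          (subst (rename t y (fresh (fv v ∪ fv t ∪ {x}))) x v)
      else lam y (subst t x v)
  | app t u, x, v => app (subst t x v) (subst u x v)
  | shift y t, x, v =>
      if y = x then shift y t
      else if y ∈ fv v then
        shift (fresh (fv v ∪ fv t ∪ {x}))
          (subst (rename t y (fresh (fv v ∪ fv t ∪ {x}))) x v)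
      else shift y (subst t x v)
  | reset t, x, v => reset (subst t x v)
termination_by t _ _ => size t
decreasing_by all_goals simp [size_rename, size] <;> omega

end Tm

/-- Values: variables and λ-abstractions. -/
inductive IsValue : Tm → Prop
  | var (x : ℕ) : IsValue (Tm.var x)
  | lam (x : ℕ) (t : Tm) : IsValue (Tm.lam x t)

/-- A term is closed if it has no free variables. -/
def Closed (t : Tm) : Prop := t.fv = ∅

/-- Pure evaluation contexts E ::= □ | v E | E t. -/
inductive ECtx : Type
  | hole : ECtx
  | appR : (v : Tm) → IsValue v → ECtx → ECtx
  | appL : ECtx → Tm → ECtx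

def ECtx.plug : ECtx → Tm → Tm
  | .hole, t => t
  | .appR v _ E, t => Tm.app v (E.plug t)
  | .appL E u, t => Tm.app (E.plug t) u

def ECtx.fv : ECtx → Finset ℕ
  | .hole => ∅
  | .appR v _ E => v.fv ∪ E.fv
  | .appL E u => E.fv ∪ u.fv

/-- Composition of pure contexts: `(E.comp E').plug t = E.plug (E'.plug t)`. -/
def ECtx.comp : ECtx → ECtx → ECtx
  | .hole, E' => E'
  | .appR v hv E, E' => .appR v hv (E.comp E')
  | .appL E u, E' => .appL (E.comp E') u

/-- Evaluation contexts F ::= □ | v F | F t | ⟨F⟩. -/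
inductive FCtx : Type
  | hole : FCtx
  | appR : (v : Tm) → IsValue v → FCtx → FCtx
  | appL : FCtx → Tm → FCtx
  | reset : FCtx → FCtx

def FCtx.plug : FCtx → Tm → Tm
  | .hole, t => t
  | .appR v _ F, t => Tm.app v (F.plug t)
  | .appL F u, t => Tm.app (F.plug t) u
  | .reset F, t => Tm.reset (F.plug t)

def FCtx.fv : FCtx → Finset ℕ
  | .hole => ∅
  | .appR v _ F => v.fv ∪ F.fv
  | .appL F u => F.fv ∪ u.fv
  | .reset F => F.fv

/-- The function `λx.⟨E[x]⟩` representing the captured delimited context `E`,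
where `x` is chosen fresh (in particular `x ∉ fv E`). -/
def contFun (E : ECtx) : Tm :=
  Tm.lam (fresh E.fv) (Tm.reset (E.plug (Tm.var (fresh E.fv))))

/-- Call-by-value reduction →_v of λ_S. -/
inductive Red : Tm → Tm → Prop
  | beta (F : FCtx) (x : ℕ) (t v : Tm) :
      IsValue v →
      Red (F.plug (Tm.app (Tm.lam x t) v)) (F.plug (t.subst x v))
  | capture (F : FCtx) (E : ECtx) (k : ℕ) (t : Tm) :
      Red (F.plug (Tm.reset (E.plug (Tm.shift k t))))
          (F.plug (Tm.reset (t.subst k (contFun E))))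
  | resetVal (F : FCtx) (v : Tm) :
      IsValue v →
      Red (F.plug (Tm.reset v)) (F.plug v)

/-- A stuck term: not a value and unable to reduce. -/
def Stuck (t : Tm) : Prop := ¬ IsValue t ∧ ∀ t', ¬ Red t t'

/-- Normal forms: values and stuck terms. -/
def NormalForm (t : Tm) : Prop := IsValue t ∨ Stuck t

/-- A control-stuck term has the form E[S k.t]. -/
def ControlStuck (t : Tm) : Prop :=
  ∃ (E : ECtx) (k : ℕ) (s : Tm), t = E.plug (Tm.shift k s)

/-- Evaluation: `t ⇓ t'` iff `t →_v* t'` and `t'` is a normal form. -/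
def Evals (t t' : Tm) : Prop := Relation.ReflTransGen Red t t' ∧ NormalForm t'

/-- `t` evaluates to some value. -/
def EvalsToValue (t : Tm) : Prop := ∃ v, Relation.ReflTransGen Red t v ∧ IsValue v

/-- `t` evaluates to some control-stuck term. -/
def EvalsToStuck (t : Tm) : Prop :=
  ∃ s, Relation.ReflTransGen Red t s ∧ ControlStuck s

/-- General contexts C ::= □ | λx.C | t C | C t | S k.C | ⟨C⟩. -/
inductive Ctx : Type
  | hole : Ctx
  | lam : ℕ → Ctx → Ctx
  | appL : Ctx → Tm → Ctx
  | appR : Tm → Ctx → Ctx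
  | shift : ℕ → Ctx → Ctx
  | reset : Ctx → Ctx

def Ctx.plug : Ctx → Tm → Tm
  | .hole, t => t
  | .lam x C, t => Tm.lam x (C.plug t)
  | .appL C u, t => Tm.app (C.plug t) u
  | .appR u C, t => Tm.app u (C.plug t)
  | .shift k C, t => Tm.shift k (C.plug t)
  | .reset C, t => Tm.reset (C.plug t)

def Ctx.fv : Ctx → Finset ℕ
  | .hole => ∅
  | .lam x C => C.fv \ {x}
  | .appL C u => C.fv ∪ u.fv
  | .appR u C => u.fv ∪ C.fv
  | .shift k C => C.fv \ {k}
  | .reset C => C.fv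

/-- Contextual equivalence ≈ for the relaxed semantics (on closed terms):
tests evaluation to values and evaluation to control-stuck terms in every
closed context. -/
def CtxEquiv (t0 t1 : Tm) : Prop :=
  ∀ C : Ctx, C.fv = ∅ →
    (EvalsToValue (C.plug t0) ↔ EvalsToValue (C.plug t1)) ∧
    (EvalsToStuck (C.plug t0) ↔ EvalsToStuck (C.plug t1))

/-- Contextual equivalence ≈_p for the original semantics: tests evaluation to
values of ⟨C[·]⟩ in every closed context C. -/
def CtxEquivP (t0 t1 : Tm) : Prop :=
  ∀ C : Ctx, C.fv = ∅ →
    (EvalsToValue (Tm.reset (C.plug t0)) ↔ EvalsToValue (Tm.reset (C.plug t1)))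

/-- Contextual equivalence ≈_E testing only with closed evaluation contexts. -/
def ECtxEquiv (t0 t1 : Tm) : Prop :=
  ∀ F : FCtx, F.fv = ∅ →
    (EvalsToValue (F.plug t0) ↔ EvalsToValue (F.plug t1)) ∧
    (EvalsToStuck (F.plug t0) ↔ EvalsToStuck (F.plug t1))

/-- Applicative simulation. -/
def IsAppSim (R : Tm → Tm → Prop) : Prop :=
  ∀ t0 t1, R t0 t1 →
    (∀ t0', Red t0 t0' →
      ∃ t1', Relation.ReflTransGen Red t1 t1' ∧ R t0' t1') ∧
    (∀ x t0', t0 = Tm.lam x t0' →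
      ∃ t1', Relation.ReflTransGen Red t1 (Tm.lam x t1') ∧
        ∀ v, IsValue v → Closed v → R (t0'.subst x v) (t1'.subst x v)) ∧
    (∀ (E0 : ECtx) (k : ℕ) (t0' : Tm), t0 = E0.plug (Tm.shift k t0') →
      ∃ (E1 : ECtx) (t1' : Tm),
        Relation.ReflTransGen Red t1 (E1.plug (Tm.shift k t1')) ∧
        ∀ E : ECtx, E.fv = ∅ →
          R (Tm.reset (t0'.subst k (contFun (E.comp E0))))
            (Tm.reset (t1'.subst k (contFun (E.comp E1)))))

/-- Applicative bisimulation. -/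
def IsAppBisim (R : Tm → Tm → Prop) : Prop :=
  IsAppSim R ∧ IsAppSim (fun a b => R b a)

/-- Applicative bisimilarity ≈_app: the largest applicative bisimulation. -/
def AppBisim (t0 t1 : Tm) : Prop := ∃ R, IsAppBisim R ∧ R t0 t1

/-- Simultaneous substitution (used only with closing substitutions mapping
variables to closed values, so no capture can occur). -/
def Tm.msubst : Tm → (ℕ → Tm) → Tm
  | .var x, σ => σ x
  | .lam x t, σ => Tm.lam x (t.msubst (Function.update σ x (Tm.var x)))
  | .app t u, σ => Tm.app (t.msubst σ) (u.msubst σ)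
  | .shift k t, σ => Tm.shift k (t.msubst (Function.update σ k (Tm.var k)))
  | .reset t, σ => Tm.reset (t.msubst σ)

/-- Open extension of a relation on closed terms: relate `t0σ` and `t1σ` for
every substitution σ mapping variables to closed values. -/
def OpenExt (R : Tm → Tm → Prop) (t0 t1 : Tm) : Prop :=
  ∀ σ : ℕ → Tm, (∀ x, IsValue (σ x) ∧ Closed (σ x)) →
    R (t0.msubst σ) (t1.msubst σ)

/-- ω := λx.x x. -/
def omegaTm : Tm := Tm.lam 0 (Tm.app (Tm.var 0) (Tm.var 0))

/-- Ω := ω ω, a diverging term. -/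
def OmegaTm : Tm := Tm.app omegaTm omegaTm

/-!
A reset survives reduction until its body becomes a value, so a term reached from `⟨t⟩` is a value
or is still delimited. A normal form is a value, control-stuck or open-stuck, and a delimited term
is never control-stuck: its reset would capture the context around the shift. Reduction creates no
free variables, whereas an open-stuck term has one in head position.
-/

theorem Tm.fv_rename_subset (t : Tm) (y z : ℕ) : (t.rename y z).fv ⊆ t.fv \ {y} ∪ {z} := by
  fun_induction Tm.rename t y z <;> grind [Tm.fv]

theorem Tm.fv_subst_subset (t : Tm) (x : ℕ) (v : Tm) :
    (t.subst x v).fv ⊆ t.fv \ {x} ∪ v.fv := by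
  fun_induction Tm.subst t x v <;> grind [Tm.fv, Tm.fv_rename_subset]

theorem ECtx.fv_plug (E : ECtx) (t : Tm) : (E.plug t).fv = E.fv ∪ t.fv := by
  induction E <;> grind [ECtx.plug, ECtx.fv, Tm.fv]

theorem FCtx.fv_plug (F : FCtx) (t : Tm) : (F.plug t).fv = F.fv ∪ t.fv := by
  induction F <;> grind [FCtx.plug, FCtx.fv, Tm.fv]

theorem fv_contFun_subset (E : ECtx) : (contFun E).fv ⊆ E.fv := by
  grind [contFun, Tm.fv, ECtx.fv_plug]

theorem fv_subst_contFun_subset (E : ECtx) (k : ℕ) (t : Tm) :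
    (t.subst k (contFun E)).fv ⊆ (E.plug (Tm.shift k t)).fv :=
  calc
    (t.subst k (contFun E)).fv ⊆ t.fv \ {k} ∪ (contFun E).fv := t.fv_subst_subset k _
    _ ⊆ t.fv \ {k} ∪ E.fv := Finset.union_subset_union_right (fv_contFun_subset E)
    _ = (E.plug (Tm.shift k t)).fv := by rw [ECtx.fv_plug, Finset.union_comm, Tm.fv]

theorem Red.fv_subset {t t' : Tm} (h : Red t t') : t'.fv ⊆ t.fv := by
  cases h <;> simp only [FCtx.fv_plug] <;> apply Finset.union_subset_union_right
  case beta x t v _ => exact t.fv_subst_subset x v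
  case capture E k t => exact fv_subst_contFun_subset E k t
  case resetVal v _ => exact subset_rfl

theorem fv_subset_of_reflTransGen_red {t t' : Tm} (h : Relation.ReflTransGen Red t t') :
    t'.fv ⊆ t.fv := by
  induction h with
  | refl => exact subset_rfl
  | tail _ hred ih => exact hred.fv_subset.trans ih

/-- Composition of evaluation contexts: plugging `F.comp G` means plugging `G`, then `F`. It is used
to close reduction under evaluation contexts. -/
def FCtx.comp : FCtx → FCtx → FCtx
  | .hole, G => G
  | .appR v hv F, G => .appR v hv (F.comp G)
  | .appL F u, G => .appL (F.comp G) u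
  | .reset F, G => .reset (F.comp G)

theorem FCtx.plug_comp (F G : FCtx) (t : Tm) : (F.comp G).plug t = F.plug (G.plug t) := by
  induction F <;> simp only [FCtx.comp, FCtx.plug, *]

theorem Red.plug {t t' : Tm} (h : Red t t') (F : FCtx) : Red (F.plug t) (F.plug t') := by
  cases h with
  | beta G x t v hv => simpa only [FCtx.plug_comp] using Red.beta (F.comp G) x t v hv
  | capture G E k t => simpa only [FCtx.plug_comp] using Red.capture (F.comp G) E k t
  | resetVal G v hv => simpa only [FCtx.plug_comp] using Red.resetVal (F.comp G) v hv

/-- Open-stuck terms `F[x v]`, where evaluation is blocked on a free variable in head position. -/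
def OpenStuck (t : Tm) : Prop :=
  ∃ (F : FCtx) (x : ℕ) (v : Tm), IsValue v ∧ t = F.plug (Tm.app (Tm.var x) v)

theorem OpenStuck.plug {t : Tm} (h : OpenStuck t) (F : FCtx) : OpenStuck (F.plug t) := by
  obtain ⟨G, x, v, hv, rfl⟩ := h
  exact ⟨F.comp G, x, v, hv, (F.plug_comp G _).symm⟩

theorem OpenStuck.of_reset {t : Tm} (h : OpenStuck t.reset) : OpenStuck t := by
  obtain ⟨F, x, v, hv, heq⟩ := h
  cases F <;> cases heq
  exact ⟨_, x, v, hv, rfl⟩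

theorem OpenStuck.not_closed {t : Tm} (h : OpenStuck t) : ¬ Closed t := by
  obtain ⟨F, x, v, -, rfl⟩ := h
  exact Finset.ne_empty_of_mem (a := x) (by simp [FCtx.fv_plug, Tm.fv])

theorem ControlStuck.appL {t : Tm} (h : ControlStuck t) (u : Tm) : ControlStuck (t.app u) := by
  obtain ⟨E, k, s, rfl⟩ := h
  exact ⟨.appL E u, k, s, rfl⟩

theorem ControlStuck.appR {t v : Tm} (h : ControlStuck t) (hv : IsValue v) :
    ControlStuck (v.app t) := by
  obtain ⟨E, k, s, rfl⟩ := h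
  exact ⟨.appR v hv E, k, s, rfl⟩

theorem ControlStuck.exists_red_reset {t : Tm} (h : ControlStuck t) : ∃ t', Red t.reset t' := by
  obtain ⟨E, k, s, rfl⟩ := h
  exact ⟨_, .capture .hole E k s⟩

theorem not_controlStuck_reset (t : Tm) : ¬ ControlStuck t.reset := by
  rintro ⟨E, k, s, heq⟩
  cases E <;> cases heq

theorem IsValue.exists_red_or_openStuck_app {v w : Tm} (hv : IsValue v) (hw : IsValue w) :
    (∃ t', Red (v.app w) t') ∨ OpenStuck (v.app w) := by
  cases hv with
  | var x => exact .inr ⟨.hole, x, w, hw, rfl⟩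
  | lam x t => exact .inl ⟨_, .beta .hole x t w hw⟩

theorem Tm.progress (t : Tm) :
    IsValue t ∨ (∃ t', Red t t') ∨ ControlStuck t ∨ OpenStuck t := by
  induction t with
  | var x => exact .inl (.var x)
  | lam x t => exact .inl (.lam x t)
  | shift k t => exact .inr (.inr (.inl ⟨.hole, k, t, rfl⟩))
  | reset t ih =>
    right
    obtain hval | ⟨t', hred⟩ | hctrl | hopen := ih
    · exact .inl ⟨_, .resetVal .hole t hval⟩
    · exact .inl ⟨_, hred.plug (.reset .hole)⟩
    · exact .inl hctrl.exists_red_reset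
    · exact .inr (.inr (hopen.plug (.reset .hole)))
  | app t u iht ihu =>
    right
    obtain hval | ⟨t', hred⟩ | hctrl | hopen := iht
    · obtain hval' | ⟨u', hred⟩ | hctrl | hopen := ihu
      · exact (hval.exists_red_or_openStuck_app hval').imp_right .inr
      · exact .inl ⟨_, hred.plug (.appR t hval .hole)⟩
      · exact .inr (.inl (hctrl.appR hval))
      · exact .inr (.inr (hopen.plug (.appR t hval .hole)))
    · exact .inl ⟨_, hred.plug (.appL .hole u)⟩
    · exact .inr (.inl (hctrl.appL u))
    · exact .inr (.inr (hopen.plug (.appL .hole u)))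

theorem Stuck.controlStuck_or_openStuck {t : Tm} (h : Stuck t) :
    ControlStuck t ∨ OpenStuck t := by
  obtain hval | ⟨t', hred⟩ | hstuck := t.progress
  · exact absurd hval h.1
  · exact absurd hred (h.2 t')
  · exact hstuck

theorem Stuck.openStuck_of_reset {t : Tm} (h : Stuck t.reset) : OpenStuck t :=
  (h.controlStuck_or_openStuck.resolve_left (not_controlStuck_reset t)).of_reset

theorem IsValue.of_plug {F : FCtx} {t : Tm} (h : IsValue (F.plug t)) : IsValue t := by
  cases F with
  | hole => exact h
  | _ => cases h

theorem Red.not_isValue {t t' : Tm} (h : Red t t') : ¬ IsValue t := by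
  intro hval
  cases h <;> cases hval.of_plug

theorem Red.isValue_or_eq_reset {t t' : Tm} (h : Red t.reset t') :
    IsValue t' ∨ ∃ s, t' = Tm.reset s := by
  generalize heq : t.reset = r at h
  cases h with
  | beta F =>
    cases F <;> cases heq
    exact .inr ⟨_, rfl⟩
  | capture F => cases F <;> cases heq <;> exact .inr ⟨_, rfl⟩
  | resetVal F v hv =>
    cases F <;> cases heq
    · exact .inl hv
    · exact .inr ⟨_, rfl⟩

theorem isValue_or_eq_reset_of_reflTransGen_red {t t' : Tm}
    (h : Relation.ReflTransGen Red t.reset t') : IsValue t' ∨ ∃ s, t' = Tm.reset s := by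
  induction h with
  | refl => exact .inr ⟨t, rfl⟩
  | tail _ hred ih =>
    obtain hval | ⟨s, rfl⟩ := ih
    · exact absurd hval hred.not_isValue
    · exact hred.isValue_or_eq_reset

theorem Evals.isValue_or_eq_reset_openStuck {t t' : Tm} (h : Evals t.reset t') :
    IsValue t' ∨ ∃ s, OpenStuck s ∧ t' = Tm.reset s := by
  obtain ⟨hred, hval | hstuck⟩ := h
  · exact .inl hval
  · obtain hval | ⟨s, rfl⟩ := isValue_or_eq_reset_of_reflTransGen_red hred
    · exact .inl hval
    · exact .inr ⟨s, hstuck.openStuck_of_reset, rfl⟩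

theorem Evals.closed {t t' : Tm} (h : Evals t t') (ht : Closed t) : Closed t' :=
  Finset.subset_empty.mp ((fv_subset_of_reflTransGen_red h.1).trans_eq ht)

/-- If `⟨t⟩` evaluates to a normal form `t'`, then `t'` is a value
or an open-stuck term of the form `⟨F[x v]⟩`; if moreover `t` is closed, then
`t'` can only be a closed value. -/
theorem eval_reset (t t' : Tm) (h : Evals (Tm.reset t) t') :
    (IsValue t' ∨
      ∃ (F : FCtx) (x : ℕ) (v : Tm),
        IsValue v ∧ t' = Tm.reset (F.plug (Tm.app (Tm.var x) v))) ∧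
    (Closed t → IsValue t' ∧ Closed t') := by
  obtain hval | ⟨s, hopen, rfl⟩ := h.isValue_or_eq_reset_openStuck
  · exact ⟨.inl hval, fun ht => ⟨hval, h.closed ht⟩⟩
  · refine ⟨.inr ?_, fun ht => absurd (h.closed ht) hopen.not_closed⟩
    obtain ⟨F, x, v, hv, rfl⟩ := hopen
    exact ⟨F, x, v, hv, rfl⟩

end LambdaS
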